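/- (Rio's maximal inequality.) Let ξ₁, ξ₂, … be identically distributed real random variables on a probability space (Ω,𝓕,P) with E[ξ₁²] < ∞, and let α(n) be the n-th strong mixing coefficient of the sequence (ξ_i), with the convention α(0) := 1/4. Let G be the distribution function of |ξ₁|, set Ḡ := 1 − G, and let Ḡ^→(t) := sup{y ∈ ℝ₊ : Ḡ(y) > t} (with sup ∅ := 0) be the rightcontinuous inverse of Ḡ. Then for every x > 0 and every n ∈ ℕ: P[ max_{k=1,…,n} |∑_{i=1}^k (ξ_i − E[ξ₁])| ≥ 2x ] ≤ (16/x²) · n · ∑_{j=0}^{n−1} ∫₀^{2α(j)} Ḡ^→(t)² dt. -/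

import Mathlib

open MeasureTheory Filter Topology

/-- The `n`-th strong mixing (α-mixing) coefficient of a sequence `ξ` under `P`. -/
noncomputable def mixingCoef {Ω E : Type*} [MeasurableSpace Ω] [MeasurableSpace E]
    (P : Measure Ω) (ξ : ℕ → Ω → E) (n : ℕ) : ℝ :=
  sSup {r : ℝ | ∃ k : ℕ, ∃ A B : Set Ω,
    MeasurableSet[⨆ i ∈ Set.Iic k, MeasurableSpace.comap (ξ i) inferInstance] A ∧
    MeasurableSet[⨆ i ∈ Set.Ici (k + n), MeasurableSpace.comap (ξ i) inferInstance] B ∧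
    r = |(P (A ∩ B)).toReal - (P A).toReal * (P B).toReal|}


/-- signed level function -/
noncomputable def rioPhi (u x : ℝ) : ℝ :=
  (Set.Ioi u).indicator (fun _ => (1:ℝ)) x - (Set.Iio (-u)).indicator (fun _ => (1:ℝ)) x

lemma rioPhi_of_nonneg {u x : ℝ} (hu : 0 < u) (hx : 0 ≤ x) :
    rioPhi u x = (Set.Iio x).indicator (fun _ => (1:ℝ)) u := by
  unfold rioPhi
  have : ¬ x < -u := by linarith
  simp [Set.indicator, this]

lemma rioPhi_of_nonpos {u x : ℝ} (hu : 0 < u) (hx : x ≤ 0) :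
    rioPhi u x = - (Set.Iio (-x)).indicator (fun _ => (1:ℝ)) u := by
  unfold rioPhi
  have : ¬ u < x := by linarith
  have h2 : x < -u ↔ u < -x := by constructor <;> intro h <;> linarith
  simp [Set.indicator, this, h2]

lemma rioPhi_abs {u x : ℝ} (hu : 0 < u) :
    |rioPhi u x| = (Set.Iio |x|).indicator (fun _ => (1:ℝ)) u := by
  rcases le_total 0 x with hx | hx
  · rw [rioPhi_of_nonneg hu hx, abs_of_nonneg hx, abs_of_nonneg]
    exact Set.indicator_nonneg (by simp) _
  · rw [rioPhi_of_nonpos hu hx, abs_of_nonpos hx, abs_neg, abs_of_nonneg]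
    exact Set.indicator_nonneg (by simp) _

lemma rio_aux_integral {y : ℝ} (hy : 0 ≤ y) :
    ∫ u in Set.Ioi (0:ℝ), (Set.Iio y).indicator (fun _ => (1:ℝ)) u = y := by
  rw [integral_indicator measurableSet_Iio, Measure.restrict_restrict measurableSet_Iio]
  have : Set.Iio y ∩ Set.Ioi 0 = Set.Ioo 0 y := by ext; simp [and_comm]
  rw [this]; simp [hy]

lemma rio_aux_integrable {y : ℝ} :
    IntegrableOn (fun u => (Set.Iio y).indicator (fun _ => (1:ℝ)) u) (Set.Ioi (0:ℝ)) := by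
  unfold IntegrableOn
  rw [integrable_indicator_iff measurableSet_Iio]
  unfold IntegrableOn
  rw [Measure.restrict_restrict measurableSet_Iio]
  have : Set.Iio y ∩ Set.Ioi 0 = Set.Ioo 0 y := by ext; simp [and_comm]
  rw [this]
  exact integrable_const _

lemma rioPhi_integral (x : ℝ) : ∫ u in Set.Ioi (0:ℝ), rioPhi u x = x := by
  rcases le_total 0 x with hx | hx
  · rw [setIntegral_congr_fun measurableSet_Ioi (fun u hu => rioPhi_of_nonneg hu hx)]
    exact rio_aux_integral hx
  · rw [setIntegral_congr_fun measurableSet_Ioi (fun u hu => rioPhi_of_nonpos hu hx),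
      integral_neg, rio_aux_integral (by linarith)]
    simp

lemma rioPhi_integral_abs (x : ℝ) : ∫ u in Set.Ioi (0:ℝ), |rioPhi u x| = |x| := by
  rw [setIntegral_congr_fun measurableSet_Ioi (fun u hu => rioPhi_abs hu)]
  exact rio_aux_integral (abs_nonneg x)

lemma rioPhi_measurable : Measurable (fun p : ℝ × ℝ => rioPhi p.1 p.2) := by
  unfold rioPhi
  refine Measurable.sub ?_ ?_
  · have : (fun p : ℝ × ℝ => (Set.Ioi p.1).indicator (fun _ => (1:ℝ)) p.2)
      = ({p : ℝ × ℝ | p.1 < p.2}).indicator (fun _ => (1:ℝ)) := by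
      ext p; simp [Set.indicator]
    rw [this]
    exact measurable_const.indicator (measurableSet_lt measurable_fst measurable_snd)
  · have : (fun p : ℝ × ℝ => (Set.Iio (-p.1)).indicator (fun _ => (1:ℝ)) p.2)
      = ({p : ℝ × ℝ | p.2 < -p.1}).indicator (fun _ => (1:ℝ)) := by
      ext p; simp [Set.indicator]
    rw [this]
    exact measurable_const.indicator (measurableSet_lt measurable_snd measurable_fst.neg)

lemma rioPhi_integrable (x : ℝ) : IntegrableOn (fun u => rioPhi u x) (Set.Ioi (0:ℝ)) := by
  have hm : Measurable (fun u => rioPhi u x) :=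
    rioPhi_measurable.comp (measurable_id.prodMk measurable_const)
  have h := rio_aux_integrable (y := |x|)
  refine Integrable.mono' h hm.aestronglyMeasurable ?_
  refine (ae_restrict_iff' measurableSet_Ioi).2 (Eventually.of_forall fun u hu => ?_)
  rw [Real.norm_eq_abs, rioPhi_abs hu]

lemma rioPhi_bound (u x : ℝ) : |rioPhi u x| ≤ 2 := by
  unfold rioPhi
  refine (abs_sub _ _).trans ?_
  have h1 : |(Set.Ioi u).indicator (fun _ => (1:ℝ)) x| ≤ 1 := by
    by_cases h : u < x <;> simp [Set.indicator, h]
  have h2 : |(Set.Iio (-u)).indicator (fun _ => (1:ℝ)) x| ≤ 1 := by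
    by_cases h : x < -u <;> simp [Set.indicator, h]
  linarith

/-- layer cake inequality for one factor -/
lemma rio_layer {Ω : Type*} [MeasurableSpace Ω] (P : Measure Ω) [IsProbabilityMeasure P]
    (X Z : Ω → ℝ) (hX : Measurable X) (hZ : Measurable Z)
    (hXZ : Integrable (fun ω => X ω * Z ω) P) :
    ‖∫ ω, X ω * Z ω ∂P‖ₑ ≤ ∫⁻ u in Set.Ioi (0:ℝ), ‖∫ ω, rioPhi u (X ω) * Z ω ∂P‖ₑ := by
  have hm : Measurable (fun p : Ω × ℝ => rioPhi p.2 (X p.1) * Z p.1) :=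
    (rioPhi_measurable.comp (measurable_snd.prodMk (hX.comp measurable_fst))).mul
      (hZ.comp measurable_fst)
  have hintg : Integrable (Function.uncurry fun ω u => rioPhi u (X ω) * Z ω)
      (P.prod (volume.restrict (Set.Ioi (0:ℝ)))) := by
    rw [integrable_prod_iff (by exact hm.aestronglyMeasurable)]
    refine ⟨Eventually.of_forall fun ω => ?_, ?_⟩
    · exact (rioPhi_integrable (X ω)).mul_const (Z ω)
    · have : (fun ω => ∫ u in Set.Ioi (0:ℝ), ‖rioPhi u (X ω) * Z ω‖) = fun ω => ‖X ω * Z ω‖ := by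
        ext ω
        simp only [norm_mul, Real.norm_eq_abs]
        rw [integral_mul_const, rioPhi_integral_abs]
      have h2 := hXZ.norm
      rw [← this] at h2
      exact h2
  have h1 : ∫ ω, X ω * Z ω ∂P = ∫ ω, (∫ u in Set.Ioi (0:ℝ), rioPhi u (X ω) * Z ω) ∂P := by
    refine integral_congr_ae (Eventually.of_forall fun ω => ?_)
    simp only []
    rw [integral_mul_const, rioPhi_integral]
  rw [h1, integral_integral_swap hintg]
  exact enorm_integral_le_lintegral_enorm _

/-- covariance of two level functions -/
lemma rio_level_cov {Ω : Type*} [MeasurableSpace Ω] (P : Measure Ω) [IsProbabilityMeasure P]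
    (a : ℝ) (Y X : Ω → ℝ) (hY' : Measurable Y) (hX' : Measurable X)
    (hmix : ∀ S T : Set ℝ, MeasurableSet S → MeasurableSet T →
      |P.real (Y ⁻¹' S ∩ X ⁻¹' T) - P.real (Y ⁻¹' S) * P.real (X ⁻¹' T)| ≤ a / 2)
    (u v : ℝ) (hu : 0 < u) (hv : 0 < v) :
    ‖∫ ω, rioPhi v (Y ω) * (rioPhi u (X ω) - ∫ ω', rioPhi u (X ω') ∂P) ∂P‖ₑ ≤
      2 * min (ENNReal.ofReal a) (min (P {ω | u < |X ω|}) (P {ω | v < |Y ω|})) := by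
  have m11 := hmix (Set.Ioi v) (Set.Ioi u) measurableSet_Ioi measurableSet_Ioi
  have m12 := hmix (Set.Ioi v) (Set.Iio (-u)) measurableSet_Ioi measurableSet_Iio
  have m21 := hmix (Set.Iio (-v)) (Set.Ioi u) measurableSet_Iio measurableSet_Ioi
  have m22 := hmix (Set.Iio (-v)) (Set.Iio (-u)) measurableSet_Iio measurableSet_Iio
  set A1 : Set Ω := Y ⁻¹' Set.Ioi v with hA1
  set A2 : Set Ω := Y ⁻¹' Set.Iio (-v) with hA2
  set B1 : Set Ω := X ⁻¹' Set.Ioi u with hB1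
  set B2 : Set Ω := X ⁻¹' Set.Iio (-u) with hB2
  have mA1 : MeasurableSet A1 := hY' measurableSet_Ioi
  have mA2 : MeasurableSet A2 := hY' measurableSet_Iio
  have mB1 : MeasurableSet B1 := hX' measurableSet_Ioi
  have mB2 : MeasurableSet B2 := hX' measurableSet_Iio
  have dA : Disjoint A1 A2 := by
    rw [Set.disjoint_left]; intro ω h1 h2
    simp only [hA1, hA2, Set.mem_preimage, Set.mem_Ioi, Set.mem_Iio] at h1 h2; linarith
  have dB : Disjoint B1 B2 := by
    rw [Set.disjoint_left]; intro ω h1 h2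
    simp only [hB1, hB2, Set.mem_preimage, Set.mem_Ioi, Set.mem_Iio] at h1 h2; linarith
  have eA : {ω | v < |Y ω|} = A1 ∪ A2 := by
    ext ω; simp [hA1, hA2, lt_abs, lt_neg]
  have eB : {ω | u < |X ω|} = B1 ∪ B2 := by
    ext ω; simp [hB1, hB2, lt_abs, lt_neg]
  have iphi : ∀ (W : Ω → ℝ) (hW : Measurable W) (w : ℝ), Integrable (fun ω => rioPhi w (W ω)) P := by
    intro W hW w
    refine Integrable.of_bound (C := 2) ?_ (Eventually.of_forall fun ω => rioPhi_bound _ _)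
    exact (rioPhi_measurable.comp (measurable_const.prodMk hW)).aestronglyMeasurable
  have pY : ∀ ω, rioPhi v (Y ω) = A1.indicator (fun _ => (1:ℝ)) ω - A2.indicator (fun _ => (1:ℝ)) ω := by
    intro ω; rfl
  have pX : ∀ ω, rioPhi u (X ω) = B1.indicator (fun _ => (1:ℝ)) ω - B2.indicator (fun _ => (1:ℝ)) ω := by
    intro ω; rfl
  have ii : ∀ S : Set Ω, MeasurableSet S → Integrable (S.indicator fun _ => (1:ℝ)) P := fun S hS =>
    (integrable_const (1:ℝ)).indicator hS
  have iv : ∀ S : Set Ω, MeasurableSet S → ∫ ω, S.indicator (fun _ => (1:ℝ)) ω ∂P = P.real S :=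
    fun S hS => by rw [integral_indicator hS]; simp
  have EY : ∫ ω, rioPhi v (Y ω) ∂P = P.real A1 - P.real A2 := by
    simp only [pY]; rw [integral_sub (ii _ mA1) (ii _ mA2), iv _ mA1, iv _ mA2]
  have EX : ∫ ω, rioPhi u (X ω) ∂P = P.real B1 - P.real B2 := by
    simp only [pX]; rw [integral_sub (ii _ mB1) (ii _ mB2), iv _ mB1, iv _ mB2]
  have pXY : ∀ ω, rioPhi v (Y ω) * rioPhi u (X ω) =
      ((A1 ∩ B1).indicator (fun _ => (1:ℝ)) ω - (A1 ∩ B2).indicator (fun _ => (1:ℝ)) ω) -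
      ((A2 ∩ B1).indicator (fun _ => (1:ℝ)) ω - (A2 ∩ B2).indicator (fun _ => (1:ℝ)) ω) := by
    intro ω
    rw [pX, pY]
    simp only [Set.indicator, Set.mem_inter_iff]
    by_cases h1 : ω ∈ A1 <;> by_cases h2 : ω ∈ A2 <;> by_cases h3 : ω ∈ B1 <;>
      by_cases h4 : ω ∈ B2 <;> simp [h1, h2, h3, h4]
  have EXY : ∫ ω, rioPhi v (Y ω) * rioPhi u (X ω) ∂P =
      (P.real (A1 ∩ B1) - P.real (A1 ∩ B2)) - (P.real (A2 ∩ B1) - P.real (A2 ∩ B2)) := by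
    simp only [pXY]
    have ii2 : ∀ S T : Set Ω, MeasurableSet S → MeasurableSet T → Integrable
        (fun ω => S.indicator (fun _ => (1:ℝ)) ω - T.indicator (fun _ => (1:ℝ)) ω) P :=
      fun S T hS hT => (ii S hS).sub (ii T hT)
    rw [integral_sub (ii2 _ _ (mA1.inter mB1) (mA1.inter mB2))
      (ii2 _ _ (mA2.inter mB1) (mA2.inter mB2)),
      integral_sub (ii _ (mA1.inter mB1)) (ii _ (mA1.inter mB2)),
      integral_sub (ii _ (mA2.inter mB1)) (ii _ (mA2.inter mB2)),
      iv _ (mA1.inter mB1), iv _ (mA1.inter mB2), iv _ (mA2.inter mB1), iv _ (mA2.inter mB2)]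
  have iXY : Integrable (fun ω => rioPhi v (Y ω) * rioPhi u (X ω)) P := by
    simp only [pXY]
    exact ((ii _ (mA1.inter mB1)).sub (ii _ (mA1.inter mB2))).sub
      ((ii _ (mA2.inter mB1)).sub (ii _ (mA2.inter mB2)))
  have hE : ∫ ω, rioPhi v (Y ω) * (rioPhi u (X ω) - ∫ ω', rioPhi u (X ω') ∂P) ∂P =
      (P.real (A1 ∩ B1) - P.real (A1 ∩ B2)) - (P.real (A2 ∩ B1) - P.real (A2 ∩ B2))
      - (P.real A1 - P.real A2) * (P.real B1 - P.real B2) := by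
    simp only [mul_sub]
    rw [integral_sub iXY ((iphi Y hY' v).mul_const _), EXY, integral_mul_const, EY, EX]
    ring
  have hPA : P.real {ω | v < |Y ω|} = P.real A1 + P.real A2 := by
    rw [eA, measureReal_union dA mA2]
  have hPB : P.real {ω | u < |X ω|} = P.real B1 + P.real B2 := by
    rw [eB, measureReal_union dB mB2]
  have rA : ∀ S : Set Ω, MeasurableSet S → P.real (S ∩ B1) + P.real (S ∩ B2) ≤ P.real S := by
    intro S hS
    rw [← measureReal_union (dB.mono Set.inter_subset_right Set.inter_subset_right)
      (hS.inter mB2)]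
    exact measureReal_mono (Set.union_subset Set.inter_subset_left Set.inter_subset_left)
  have rB : ∀ S : Set Ω, MeasurableSet S → P.real (A1 ∩ S) + P.real (A2 ∩ S) ≤ P.real S := by
    intro S hS
    rw [← measureReal_union (dA.mono Set.inter_subset_left Set.inter_subset_left)
      (mA2.inter hS)]
    exact measureReal_mono (Set.union_subset Set.inter_subset_right Set.inter_subset_right)
  have hA1' := rA A1 mA1
  have hA2' := rA A2 mA2
  have hB1' := rB B1 mB1
  have hB2' := rB B2 mB2
  have hA : P.real A1 + P.real A2 ≤ 1 := by
    rw [← hPA]; exact measureReal_le_one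
  have hB : P.real B1 + P.real B2 ≤ 1 := by
    rw [← hPB]; exact measureReal_le_one
  have n11 : 0 ≤ P.real (A1 ∩ B1) := measureReal_nonneg
  have n12 : 0 ≤ P.real (A1 ∩ B2) := measureReal_nonneg
  have n21 : 0 ≤ P.real (A2 ∩ B1) := measureReal_nonneg
  have n22 : 0 ≤ P.real (A2 ∩ B2) := measureReal_nonneg
  have na1 : 0 ≤ P.real A1 := measureReal_nonneg
  have na2 : 0 ≤ P.real A2 := measureReal_nonneg
  have nb1 : 0 ≤ P.real B1 := measureReal_nonneg
  have nb2 : 0 ≤ P.real B2 := measureReal_nonneg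
  have ha : 0 ≤ a := by
    have := (abs_nonneg _).trans m11
    linarith
  have hprod : |(P.real A1 - P.real A2) * (P.real B1 - P.real B2)| ≤
      (P.real A1 + P.real A2) * (P.real B1 + P.real B2) := by
    rw [abs_mul]
    refine mul_le_mul (abs_le.2 ⟨by linarith, by linarith⟩) (abs_le.2 ⟨by linarith, by linarith⟩)
      (abs_nonneg _) (by linarith)
  rw [hE, Real.enorm_eq_ofReal_abs]
  have k1 : |(P.real (A1 ∩ B1) - P.real (A1 ∩ B2)) - (P.real (A2 ∩ B1) - P.real (A2 ∩ B2))
      - (P.real A1 - P.real A2) * (P.real B1 - P.real B2)| ≤ 2 * a := by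
    rw [abs_le] at m11 m12 m21 m22 ⊢
    constructor <;> nlinarith
  have k2 : |(P.real (A1 ∩ B1) - P.real (A1 ∩ B2)) - (P.real (A2 ∩ B1) - P.real (A2 ∩ B2))
      - (P.real A1 - P.real A2) * (P.real B1 - P.real B2)| ≤ 2 * P.real {ω | u < |X ω|} := by
    rw [hPB]
    have : (P.real A1 + P.real A2) * (P.real B1 + P.real B2) ≤ P.real B1 + P.real B2 :=
      mul_le_of_le_one_left (by linarith) hA
    rw [abs_le] at hprod ⊢
    constructor <;> linarith [hprod.1, hprod.2]
  have k3 : |(P.real (A1 ∩ B1) - P.real (A1 ∩ B2)) - (P.real (A2 ∩ B1) - P.real (A2 ∩ B2))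
      - (P.real A1 - P.real A2) * (P.real B1 - P.real B2)| ≤ 2 * P.real {ω | v < |Y ω|} := by
    rw [hPA]
    have : (P.real A1 + P.real A2) * (P.real B1 + P.real B2) ≤ P.real A1 + P.real A2 :=
      mul_le_of_le_one_right (by linarith) hB
    rw [abs_le] at hprod ⊢
    constructor <;> linarith [hprod.1, hprod.2]
  rw [← ofReal_measureReal (μ := P) (s := {ω | u < |X ω|}),
    ← ofReal_measureReal (μ := P) (s := {ω | v < |Y ω|}), ← ENNReal.ofReal_min,
    ← ENNReal.ofReal_min, show (2 : ENNReal) = ENNReal.ofReal 2 by simp,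
    ← ENNReal.ofReal_mul (by norm_num)]
  refine ENNReal.ofReal_le_ofReal ?_
  rw [mul_min_of_nonneg _ _ (by norm_num), mul_min_of_nonneg _ _ (by norm_num)]
  exact le_min k1 (le_min k2 k3)

/-- covariance inequality -/
lemma rio_cov {Ω : Type*} [MeasurableSpace Ω] (P : Measure Ω) [IsProbabilityMeasure P]
    (a : ℝ) (Y X : Ω → ℝ) (hY' : Measurable Y) (hX' : Measurable X)
    (hY2 : MemLp Y 2 P) (hX2 : MemLp X 2 P)
    (hmix : ∀ S T : Set ℝ, MeasurableSet S → MeasurableSet T →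
      |P.real (Y ⁻¹' S ∩ X ⁻¹' T) - P.real (Y ⁻¹' S) * P.real (X ⁻¹' T)| ≤ a / 2) :
    ‖∫ ω, Y ω * (X ω - ∫ ω', X ω' ∂P) ∂P‖ₑ ≤
      2 * ∫⁻ u in Set.Ioi (0:ℝ), ∫⁻ v in Set.Ioi (0:ℝ),
        min (ENNReal.ofReal a) (min (P {ω | u < |X ω|}) (P {ω | v < |Y ω|})) := by
  have hXi : Integrable X P := hX2.integrable (by norm_num)
  have hYi : Integrable Y P := hY2.integrable (by norm_num)
  have hYX : Integrable (fun ω => X ω * Y ω) P := hX2.integrable_mul hY2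
  have e1 : ∫ ω, Y ω * (X ω - ∫ ω', X ω' ∂P) ∂P = ∫ ω, X ω * (Y ω - ∫ ω', Y ω' ∂P) ∂P := by
    simp only [mul_sub]
    rw [integral_sub (by simpa [mul_comm] using hYX) (hYi.mul_const _),
      integral_sub hYX (hXi.mul_const _), integral_mul_const, integral_mul_const]
    simp only [mul_comm]
  rw [e1]
  refine (rio_layer P X _ hX' (hY'.sub_const _) ?_).trans ?_
  · simp only [mul_sub]
    exact hYX.sub (hXi.mul_const _)
  rw [← lintegral_const_mul' _ _ (by norm_num)]
  refine setLIntegral_mono' measurableSet_Ioi fun u hu => ?_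
  rw [← lintegral_const_mul' _ _ (by norm_num)]
  have mphi : Measurable (fun ω => rioPhi u (X ω)) :=
    rioPhi_measurable.comp (measurable_const.prodMk hX')
  have iphi : Integrable (fun ω => rioPhi u (X ω)) P :=
    Integrable.of_bound (C := 2) mphi.aestronglyMeasurable
      (Eventually.of_forall fun ω => rioPhi_bound _ _)
  have iphiY : Integrable (fun ω => rioPhi u (X ω) * Y ω) P :=
    hYi.bdd_mul (c := 2) mphi.aestronglyMeasurable (Eventually.of_forall fun ω => rioPhi_bound _ _)
  have e2 : ∫ ω, rioPhi u (X ω) * (Y ω - ∫ ω', Y ω' ∂P) ∂P =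
      ∫ ω, Y ω * (rioPhi u (X ω) - ∫ ω', rioPhi u (X ω') ∂P) ∂P := by
    simp only [mul_sub]
    rw [integral_sub iphiY (iphi.mul_const _),
      integral_sub (by simpa [mul_comm] using iphiY) (hYi.mul_const _), integral_mul_const,
      integral_mul_const]
    simp only [mul_comm]
  rw [e2]
  refine (rio_layer P Y _ hY' (mphi.sub_const _) ?_).trans ?_
  · simp only [mul_sub]
    exact Integrable.sub (by simpa [mul_comm] using iphiY) (hYi.mul_const _)
  refine setLIntegral_mono' measurableSet_Ioi fun v hv => ?_
  exact rio_level_cov P a Y X hY' hX' hmix u v hu hv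

lemma rio_L {T : Type*} [MeasurableSpace T] (ν : Measure T) [SFinite ν] (D : Set (T × ℝ))
    (hD : MeasurableSet D) (q : T → ENNReal)
    (hq : ∀ᵐ t ∂ν, (volume.restrict (Set.Ioi (0:ℝ))) {u | (t, u) ∈ D} = q t) :
    ∫⁻ u in Set.Ioi (0:ℝ), ∫⁻ v in Set.Ioi (0:ℝ), ν {t | (t, u) ∈ D ∧ (t, v) ∈ D} =
      ∫⁻ t, q t ^ 2 ∂ν := by
  set f : T → ℝ → ENNReal := fun t u => D.indicator (fun _ => 1) (t, u) with hf
  have hfm : Measurable (Function.uncurry f) := by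
    have : Function.uncurry f = D.indicator (fun _ => 1) := by ext ⟨t, u⟩; rfl
    rw [this]; exact measurable_const.indicator hD
  have hfu : ∀ u, Measurable (fun t => f t u) := fun u =>
    hfm.comp (measurable_id.prodMk measurable_const)
  have hft : ∀ t, Measurable (f t) := fun t =>
    hfm.comp (measurable_const.prodMk measurable_id)
  set q' : T → ENNReal := fun t => ∫⁻ v in Set.Ioi (0:ℝ), f t v with hq'
  have hq'm : Measurable q' := hfm.lintegral_prod_right'
  have hqq : ∀ t, q' t = (volume.restrict (Set.Ioi (0:ℝ))) {u | (t, u) ∈ D} := by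
    intro t
    have hs : MeasurableSet {u | (t, u) ∈ D} := measurable_prodMk_left hD
    rw [← lintegral_indicator_one hs]
    rfl
  have h1 : ∀ u v, ν {t | (t, u) ∈ D ∧ (t, v) ∈ D} = ∫⁻ t, f t u * f t v ∂ν := by
    intro u v
    have hs : MeasurableSet {t | (t, u) ∈ D ∧ (t, v) ∈ D} :=
      (measurable_prodMk_right hD).inter (measurable_prodMk_right hD)
    rw [← lintegral_indicator_one hs]
    congr 1; ext t
    by_cases h1 : (t, u) ∈ D <;> by_cases h2 : (t, v) ∈ D <;> simp [hf, Set.indicator, h1, h2]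
  simp only [h1]
  have h2 : ∀ u, ∫⁻ v in Set.Ioi (0:ℝ), ∫⁻ t, f t u * f t v ∂ν = ∫⁻ t, f t u * q' t ∂ν := by
    intro u
    rw [lintegral_lintegral_swap]
    · refine lintegral_congr fun t => ?_
      rw [lintegral_const_mul _ (hft t)]
    · exact (((hfu u).comp measurable_snd).mul (hfm.comp measurable_swap)).aemeasurable
  simp only [h2]
  rw [lintegral_lintegral_swap]
  · refine lintegral_congr_ae ?_
    filter_upwards [hq] with t ht
    rw [lintegral_mul_const _ (hft t), ← ht, ← hqq]
    simp only [hq', pow_two]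
  · exact ((hfm.comp measurable_swap).mul (hq'm.comp measurable_snd)).aemeasurable

lemma rio_J {Ω : Type*} [MeasurableSpace Ω] (P : Measure Ω) [IsProbabilityMeasure P]
    (X : Ω → ℝ) (hX : Measurable X) (hX2 : MemLp X 2 P) (Q : ℝ → ℝ)
    (hQ : ∀ t, Q t = sSup {y : ℝ | 0 ≤ y ∧ t < P.real {ω | y < |X ω|}}) (a : ℝ) :
    ∫⁻ u in Set.Ioi (0:ℝ), ∫⁻ v in Set.Ioi (0:ℝ),
        min (ENNReal.ofReal a) (min (P {ω | u < |X ω|}) (P {ω | v < |X ω|})) =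
      ENNReal.ofReal (∫ t in Set.Ioc (0:ℝ) a, Q t ^ 2) := by
  set H : ℝ → ℝ := fun y => P.real {ω | y < |X ω|} with hH
  have hHanti : Antitone H := fun y z hyz =>
    measureReal_mono (fun ω (h : z < |X ω|) => lt_of_le_of_lt hyz h)
  have hHm : Measurable H := hHanti.measurable
  have hXi : Integrable (fun ω => |X ω|) P := (hX2.integrable (by norm_num)).abs
  have hQ0 : ∀ t, 0 ≤ Q t := fun t => by
    rw [hQ]; exact Real.sSup_nonneg fun y hy => hy.1
  have hbdd : ∀ t, 0 < t → BddAbove {y : ℝ | 0 ≤ y ∧ t < H y} := by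
    intro t ht
    refine ⟨(∫ ω, |X ω| ∂P) / t, fun y hy => ?_⟩
    rw [le_div_iff₀ ht]
    have h1 := mul_meas_ge_le_integral_of_nonneg (μ := P) (f := fun ω => |X ω|)
      (Eventually.of_forall fun ω => abs_nonneg _) hXi y
    have h2 : H y ≤ P.real {ω | y ≤ |X ω|} := measureReal_mono fun ω (h : y < |X ω|) => h.le
    have := mul_le_mul_of_nonneg_left (hy.2.le.trans h2) hy.1
    linarith
  have hquant : ∀ t, 0 < t →
      (volume.restrict (Set.Ioi (0:ℝ))) {u | t < H u} = ENNReal.ofReal (Q t) := by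
    intro t ht
    rw [Measure.restrict_apply (measurableSet_lt measurable_const hHm)]
    apply le_antisymm
    · have : {u | t < H u} ∩ Set.Ioi 0 ⊆ Set.Ioc 0 (Q t) := by
        rintro u ⟨h1, h2⟩
        refine ⟨h2, ?_⟩
        rw [hQ]
        exact le_csSup (hbdd t ht) ⟨le_of_lt h2, h1⟩
      refine (measure_mono this).trans ?_
      simp
    · have : Set.Ioo 0 (Q t) ⊆ {u | t < H u} ∩ Set.Ioi 0 := by
        rintro u ⟨h1, h2⟩
        refine ⟨?_, h1⟩
        rw [hQ] at h2
        have hne : {y : ℝ | 0 ≤ y ∧ t < H y}.Nonempty := by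
          by_contra hne
          rw [Set.not_nonempty_iff_eq_empty] at hne
          have h2' : u < sSup {y : ℝ | 0 ≤ y ∧ t < H y} := h2
          rw [hne, Real.sSup_empty] at h2'
          linarith
        obtain ⟨y, hy, huy⟩ := exists_lt_of_lt_csSup hne h2
        exact lt_of_lt_of_le hy.2 (hHanti huy.le)
      refine le_trans ?_ (measure_mono this)
      simp
  have hPH : ∀ y, P {ω | y < |X ω|} = ENNReal.ofReal (H y) := fun y => by
    simp [hH]
  have hH0 : ∀ y, 0 ≤ H y := fun y => measureReal_nonneg
  have hDm : MeasurableSet {p : ℝ × ℝ | p.1 < H p.2} :=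
    measurableSet_lt measurable_fst (hHm.comp measurable_snd)
  have hmin : ∀ u v, min (ENNReal.ofReal a) (min (P {ω | u < |X ω|}) (P {ω | v < |X ω|})) =
      (volume.restrict (Set.Ioc 0 a)) {t | t < H u ∧ t < H v} := by
    intro u v
    rw [hPH, hPH, ← ENNReal.ofReal_min, ← ENNReal.ofReal_min]
    have : {t | t < H u ∧ t < H v} = Set.Iio (min (H u) (H v)) := by ext t; simp
    rw [this, Measure.restrict_apply measurableSet_Iio]
    have hh0 : 0 ≤ min (H u) (H v) := le_min (hH0 u) (hH0 v)
    set h := min (H u) (H v)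
    apply le_antisymm
    · have : Set.Ioo 0 (min a h) ⊆ Set.Iio h ∩ Set.Ioc 0 a := by
        rintro t ⟨h1, h2⟩
        exact ⟨lt_of_lt_of_le h2 (min_le_right _ _), h1, h2.le.trans (min_le_left _ _)⟩
      refine le_trans ?_ (measure_mono this)
      simp
    · have : Set.Iio h ∩ Set.Ioc 0 a ⊆ Set.Ioc 0 (min a h) := by
        rintro t ⟨h1, h2⟩
        exact ⟨h2.1, le_min h2.2 (le_of_lt h1)⟩
      refine (measure_mono this).trans ?_
      simp
  have hae : ∀ᵐ t ∂(volume.restrict (Set.Ioc 0 a)),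
      (volume.restrict (Set.Ioi (0:ℝ))) {u | t < H u} = ENNReal.ofReal (Q t) :=
    (ae_restrict_iff' measurableSet_Ioc).2 (Eventually.of_forall fun t ht => hquant t ht.1)
  have hmain : ∫⁻ u in Set.Ioi (0:ℝ), ∫⁻ v in Set.Ioi (0:ℝ),
        min (ENNReal.ofReal a) (min (P {ω | u < |X ω|}) (P {ω | v < |X ω|})) =
        ∫⁻ t in Set.Ioc 0 a, ENNReal.ofReal (Q t) ^ 2 := by
    rw [← rio_L (volume.restrict (Set.Ioc 0 a)) _ hDm _ hae]
    simp only [hmin]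
    rfl
  have hfin : ∫⁻ u in Set.Ioi (0:ℝ), ∫⁻ v in Set.Ioi (0:ℝ),
        min (ENNReal.ofReal a) (min (P {ω | u < |X ω|}) (P {ω | v < |X ω|})) ≤
        ∫⁻ ω, ENNReal.ofReal (|X ω|) ^ 2 ∂P := by
    have hD2 : MeasurableSet {p : Ω × ℝ | p.2 < |X p.1|} :=
      measurableSet_lt measurable_snd (hX.comp measurable_fst).abs
    rw [← rio_L P _ hD2 (fun ω => ENNReal.ofReal |X ω|) (Eventually.of_forall fun ω => ?_)]
    · refine lintegral_mono fun u => lintegral_mono fun v => ?_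
      refine (min_le_right _ _).trans ?_
      rcases le_total u v with huv | huv
      · refine (min_le_right _ _).trans (measure_mono fun ω (h : v < |X ω|) => ?_)
        exact ⟨lt_of_le_of_lt huv h, h⟩
      · refine (min_le_left _ _).trans (measure_mono fun ω (h : u < |X ω|) => ?_)
        exact ⟨h, lt_of_le_of_lt huv h⟩
    · have : {u | (ω, u) ∈ {p : Ω × ℝ | p.2 < |X p.1|}} = Set.Iio |X ω| := rfl
      rw [this, Measure.restrict_apply measurableSet_Iio]
      have : Set.Iio |X ω| ∩ Set.Ioi 0 = Set.Ioo 0 |X ω| := by ext; simp [and_comm]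
      rw [this]; simp
  have hsqfin : ∫⁻ ω, ENNReal.ofReal (|X ω|) ^ 2 ∂P < ⊤ := by
    have h := hX2.integrable_sq
    have h2 := h.2
    rw [hasFiniteIntegral_iff_ofReal (Eventually.of_forall fun ω => sq_nonneg _)] at h2
    convert h2 using 3 with ω
    rw [← ENNReal.ofReal_pow (abs_nonneg _), sq_abs]
  have hQm : AEMeasurable Q (volume.restrict (Set.Ioc 0 a)) := by
    have hqm : Measurable fun t => (volume.restrict (Set.Ioi (0:ℝ))) {u | t < H u} :=
      measurable_measure_prodMk_left hDm
    refine ⟨fun t => ((volume.restrict (Set.Ioi (0:ℝ))) {u | t < H u}).toReal,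
      hqm.ennreal_toReal, ?_⟩
    filter_upwards [hae] with t ht
    rw [ht, ENNReal.toReal_ofReal (hQ0 t)]
  rw [hmain]
  have hlt : ∫⁻ t in Set.Ioc 0 a, ENNReal.ofReal (Q t ^ 2) < ⊤ := by
    simp only [ENNReal.ofReal_pow (hQ0 _)]
    rw [← hmain]; exact hfin.trans_lt hsqfin
  rw [ofReal_integral_eq_lintegral_ofReal ⟨(hQm.pow_const 2).aestronglyMeasurable, ?_⟩
    (Eventually.of_forall fun t => sq_nonneg _)]
  · simp only [ENNReal.ofReal_pow (hQ0 _)]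
  · rw [hasFiniteIntegral_iff_ofReal (Eventually.of_forall fun ω => sq_nonneg _)]
    exact hlt

lemma rio_shift {Ω : Type*} [MeasurableSpace Ω] (P : Measure Ω) [IsProbabilityMeasure P]
    (X X' Y : Ω → ℝ) (hX : Measurable X)
    (hid : ∀ u, P {ω | u < |X' ω|} = P {ω | u < |X ω|})
    (hY : ∀ ω, |Y ω| ≤ |X' ω| + |∫ ω', X ω' ∂P|) (a : ENNReal) :
    ∫⁻ u in Set.Ioi (0:ℝ), ∫⁻ v in Set.Ioi (0:ℝ),
        min a (min (P {ω | u < |X ω|}) (P {ω | v < |Y ω|})) ≤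
    2 * ∫⁻ u in Set.Ioi (0:ℝ), ∫⁻ v in Set.Ioi (0:ℝ),
        min a (min (P {ω | u < |X ω|}) (P {ω | v < |X ω|})) := by
  rw [← lintegral_const_mul' _ _ (by norm_num)]
  refine setLIntegral_mono' measurableSet_Ioi fun u hu => ?_
  set H : ℝ → ENNReal := fun y => P {ω | y < |X ω|} with hH
  have hHanti : Antitone H := fun y z hyz =>
    measure_mono (fun ω (h : z < |X ω|) => lt_of_le_of_lt hyz h)
  have hH1 : ∀ y, H y ≤ 1 := fun y => prob_le_one
  set m := |∫ ω', X ω' ∂P| with hm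
  have hm0 : 0 ≤ m := abs_nonneg _
  set c := min a (H u) with hc
  have hmH : ENNReal.ofReal m ≤ ∫⁻ v in Set.Ioi (0:ℝ), H v := by
    have h1 : ENNReal.ofReal m ≤ ∫⁻ ω, ENNReal.ofReal |X ω| ∂P := by
      have := enorm_integral_le_lintegral_enorm (μ := P) X
      simpa [Real.enorm_eq_ofReal_abs] using this
    refine h1.trans (le_of_eq ?_)
    exact lintegral_eq_lintegral_meas_lt P (Eventually.of_forall fun ω => abs_nonneg _)
      hX.abs.aemeasurable
  have hpt : ∀ v, (Set.Ioi (0:ℝ)).indicator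
      (fun v => min a (min (H u) (P {ω | v < |Y ω|}))) v ≤
      (Set.Ioc 0 m).indicator (fun _ => c) v +
      (Set.Ioi (0:ℝ)).indicator (fun v => min a (min (H u) (H v))) (v - m) := by
    intro v
    by_cases hv : 0 < v
    · rw [Set.indicator_of_mem (show v ∈ Set.Ioi (0:ℝ) from hv)]
      by_cases hvm : v ≤ m
      · rw [Set.indicator_of_mem (show v ∈ Set.Ioc 0 m from ⟨hv, hvm⟩)]
        refine le_trans ?_ le_self_add
        rw [hc, ← min_assoc]; exact min_le_left _ _
      · push Not at hvm
        rw [Set.indicator_of_mem (show v - m ∈ Set.Ioi (0:ℝ) from sub_pos.2 hvm)]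
        refine le_trans ?_ le_add_self
        refine min_le_min le_rfl (min_le_min le_rfl ?_)
        rw [hH]; simp only []
        rw [← hid]
        refine measure_mono fun ω (h : v < |Y ω|) => ?_
        have := hY ω
        show v - m < |X' ω|
        linarith
    · rw [Set.indicator_of_notMem (show v ∉ Set.Ioi (0:ℝ) from hv)]
      exact zero_le
  rw [← lintegral_indicator measurableSet_Ioi]
  refine (lintegral_mono hpt).trans ?_
  rw [lintegral_add_left (measurable_const.indicator measurableSet_Ioc),
    lintegral_sub_right_eq_self (fun v => (Set.Ioi (0:ℝ)).indicator (fun v => min a (min (H u) (H v))) v) m,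
    lintegral_indicator measurableSet_Ioi, lintegral_indicator measurableSet_Ioc, two_mul]
  refine add_le_add ?_ le_rfl
  simp only [lintegral_const, Measure.restrict_apply MeasurableSet.univ, Set.univ_inter,
    Real.volume_Ioc, sub_zero]
  refine (mul_le_mul_right hmH c).trans ?_
  rw [← lintegral_const_mul _ hHanti.measurable]
  refine lintegral_mono fun v => ?_
  have hc1 : c ≤ 1 := (min_le_right _ _).trans (hH1 u)
  refine le_min ?_ (le_min ?_ ?_)
  · exact (mul_le_of_le_one_right' (hH1 v)).trans (min_le_left _ _)
  · exact (mul_le_of_le_one_right' (hH1 v)).trans (min_le_right _ _)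
  · exact mul_le_of_le_one_left' hc1

/-- running maximum (with 0) of partial sums -/
noncomputable def rioM {Ω : Type*} (X : ℕ → Ω → ℝ) : ℕ → Ω → ℝ
  | 0, _ => 0
  | k + 1, ω => max (rioM X k ω) (∑ i ∈ Finset.range (k + 1), X i ω)

lemma rioM_measurable {Ω : Type*} [MeasurableSpace Ω] (X : ℕ → Ω → ℝ) (k : ℕ)
    (h : ∀ l < k, Measurable (X l)) : Measurable (rioM X k) := by
  induction k with
  | zero => exact measurable_const
  | succ k ih =>
    have h1 : Measurable (rioM X k) := ih fun l hl => h l (by omega)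
    have h2 : Measurable (fun ω => ∑ i ∈ Finset.range (k + 1), X i ω) :=
      Finset.measurable_sum _ fun i hi => h i (Finset.mem_range.1 hi)
    exact h1.max h2

lemma rioM_nonneg {Ω : Type*} (X : ℕ → Ω → ℝ) (k : ℕ) (ω : Ω) : 0 ≤ rioM X k ω := by
  induction k with
  | zero => exact le_rfl
  | succ k ih => exact ih.trans (le_max_left _ _)

lemma rioM_ge {Ω : Type*} (X : ℕ → Ω → ℝ) (k : ℕ) (ω : Ω) :
    ∑ i ∈ Finset.range k, X i ω ≤ rioM X k ω := by
  cases k with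
  | zero => simp [rioM]
  | succ k => exact le_max_right _ _

lemma rioM_mono {Ω : Type*} (X : ℕ → Ω → ℝ) (ω : Ω) : Monotone fun k => rioM X k ω :=
  monotone_nat_of_le_succ fun _ => le_max_left _ _

lemma rioM_incr {Ω : Type*} (X : ℕ → Ω → ℝ) (k : ℕ) (ω : Ω) :
    |rioM X (k + 1) ω - rioM X k ω| ≤ |X k ω| := by
  have h0 : rioM X k ω ≤ rioM X (k + 1) ω := le_max_left _ _
  rw [abs_of_nonneg (by linarith)]
  have h1 := rioM_ge X k ω
  have h2 : rioM X (k + 1) ω ≤ rioM X k ω + |X k ω| := by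
    refine max_le (by linarith [abs_nonneg (X k ω)]) ?_
    rw [Finset.sum_range_succ]
    linarith [le_abs_self (X k ω)]
  linarith

lemma rioM_sq {Ω : Type*} (X : ℕ → Ω → ℝ) (n : ℕ) (ω : Ω) :
    rioM X n ω ^ 2 ≤ 2 * (∑ i ∈ Finset.range n, X i ω) * rioM X n ω
      - 2 * ∑ k ∈ Finset.range n, rioM X k ω * X k ω := by
  induction n with
  | zero => simp [rioM]
  | succ n ih =>
    rw [Finset.sum_range_succ (fun k => rioM X k ω * X k ω)]
    have hS : ∑ i ∈ Finset.range (n + 1), X i ω = ∑ i ∈ Finset.range n, X i ω + X n ω :=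
      Finset.sum_range_succ _ _
    have hM : rioM X (n + 1) ω = max (rioM X n ω) (∑ i ∈ Finset.range (n + 1), X i ω) := rfl
    rcases le_total (rioM X n ω) (∑ i ∈ Finset.range (n + 1), X i ω) with h | h
    · rw [max_eq_right h] at hM
      rw [hM, hS]
      nlinarith [sq_nonneg (rioM X n ω - (∑ i ∈ Finset.range n, X i ω + X n ω))]
    · rw [max_eq_left h] at hM
      rw [hM, hS]
      linarith

lemma rioM_tele {Ω : Type*} (X : ℕ → Ω → ℝ) (n : ℕ) (ω : Ω) :
    rioM X n ω = ∑ j ∈ Finset.range n, (rioM X (j + 1) ω - rioM X j ω) := by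
  rw [Finset.sum_range_sub (fun j => rioM X j ω)]
  simp [rioM]

lemma rioS_sq {Ω : Type*} (X : ℕ → Ω → ℝ) (n : ℕ) (ω : Ω) :
    (∑ i ∈ Finset.range n, X i ω) ^ 2 =
      ∑ k ∈ Finset.range n, (X k ω * X k ω + 2 * ∑ j ∈ Finset.range k, X j ω * X k ω) := by
  induction n with
  | zero => simp
  | succ n ih =>
    rw [Finset.sum_range_succ _ n, Finset.sum_range_succ _ n, ← ih, ← Finset.sum_mul]
    ring

lemma rio_pointwise {Ω : Type*} (X : ℕ → Ω → ℝ) (n : ℕ) (ω : Ω) :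
    rioM X n ω ^ 2 ≤ ∑ k ∈ Finset.range n, (4 * (X k ω * X k ω +
      2 * ∑ j ∈ Finset.range k, X j ω * X k ω) -
      4 * ∑ j ∈ Finset.range k, (rioM X (j + 1) ω - rioM X j ω) * X k ω) := by
  rw [Finset.sum_sub_distrib, ← Finset.mul_sum, ← rioS_sq, ← Finset.mul_sum]
  have h := rioM_sq X n ω
  have h2 : ∑ k ∈ Finset.range n, ∑ j ∈ Finset.range k,
      (rioM X (j + 1) ω - rioM X j ω) * X k ω = ∑ k ∈ Finset.range n, rioM X k ω * X k ω := by
    refine Finset.sum_congr rfl fun k _ => ?_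
    rw [← Finset.sum_mul, ← rioM_tele]
  rw [h2]
  nlinarith [sq_nonneg (rioM X n ω - 2 * ∑ i ∈ Finset.range n, X i ω)]

lemma rio_sumI (I : ℕ → ℝ) (hI : ∀ d, 0 ≤ I d) (n k : ℕ) (hk : k < n) :
    I 0 + ∑ j ∈ Finset.range k, I (k - j) ≤ ∑ d ∈ Finset.range n, I d := by
  have h1 : ∑ j ∈ Finset.range (k + 1), I (k - j) = ∑ j ∈ Finset.range (k + 1), I j := by
    rw [← Finset.sum_range_reflect I (k + 1)]
    simp
  rw [Finset.sum_range_succ] at h1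
  simp only [Nat.sub_self] at h1
  have h2 : ∑ j ∈ Finset.range (k + 1), I j ≤ ∑ d ∈ Finset.range n, I d :=
    Finset.sum_le_sum_of_subset_of_nonneg (by simpa using hk) fun i _ _ => hI i
  linarith

lemma rioM_memLp {Ω : Type*} [MeasurableSpace Ω] (P : Measure Ω) [IsProbabilityMeasure P]
    (X : ℕ → Ω → ℝ) (hX : ∀ i, Measurable (X i)) (hX2 : ∀ i, MemLp (X i) 2 P) (j : ℕ) :
    MemLp (fun ω => rioM X (j + 1) ω - rioM X j ω) 2 P :=
  (hX2 j).mono ((rioM_measurable X _ fun l _ => hX l).sub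
    (rioM_measurable X _ fun l _ => hX l)).aestronglyMeasurable
    (Eventually.of_forall fun ω => rioM_incr X j ω)

lemma rio_one_sided {Ω : Type*} [MeasurableSpace Ω] (P : Measure Ω) [IsProbabilityMeasure P]
    (X : ℕ → Ω → ℝ) (hX : ∀ i, Measurable (X i)) (hX2 : ∀ i, MemLp (X i) 2 P)
    (I : ℕ → ℝ) (hI : ∀ d, 0 ≤ I d)
    (hc1 : ∀ j k, j ≤ k → |∫ ω, X j ω * X k ω ∂P| ≤ 2 * I (k - j))
    (hc2 : ∀ j k, j < k → |∫ ω, (rioM X (j + 1) ω - rioM X j ω) * X k ω ∂P| ≤ 4 * I (k - j))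
    (n : ℕ) : ∫⁻ ω, ENNReal.ofReal (rioM X n ω ^ 2) ∂P ≤
      ENNReal.ofReal (32 * n * ∑ d ∈ Finset.range n, I d) := by
  have i1 : ∀ j k, Integrable (fun ω => X j ω * X k ω) P := fun j k =>
    (hX2 j).integrable_mul (hX2 k)
  have i2 : ∀ j k, Integrable (fun ω => (rioM X (j + 1) ω - rioM X j ω) * X k ω) P := fun j k =>
    (rioM_memLp P X hX hX2 j).integrable_mul (hX2 k)
  have s1 : ∀ k, Integrable (fun ω => 4 * (X k ω * X k ω +
      2 * ∑ j ∈ Finset.range k, X j ω * X k ω)) P := fun k =>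
    ((i1 k k).add ((integrable_finsetSum _ fun j _ => i1 j k).const_mul 2)).const_mul 4
  have s2 : ∀ k, Integrable (fun ω =>
      4 * ∑ j ∈ Finset.range k, (rioM X (j + 1) ω - rioM X j ω) * X k ω) P := fun k =>
    (integrable_finsetSum _ fun j _ => i2 j k).const_mul 4
  have hle : ∀ k < n, ∫ ω, (4 * (X k ω * X k ω +
      2 * ∑ j ∈ Finset.range k, X j ω * X k ω) -
      4 * ∑ j ∈ Finset.range k, (rioM X (j + 1) ω - rioM X j ω) * X k ω) ∂P ≤
      32 * ∑ d ∈ Finset.range n, I d := by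
    intro k hk
    rw [integral_sub (s1 k) (s2 k), integral_const_mul, integral_const_mul,
      integral_add (i1 k k) ((integrable_finsetSum _ fun j _ => i1 j k).const_mul 2),
      integral_const_mul, integral_finsetSum _ fun j _ => i1 j k,
      integral_finsetSum _ fun j _ => i2 j k]
    have a1 : ∫ ω, X k ω * X k ω ∂P ≤ 2 * I 0 := by
      have := (abs_le.1 (hc1 k k le_rfl)).2
      simpa using this
    have a2 : ∑ j ∈ Finset.range k, ∫ ω, X j ω * X k ω ∂P ≤
        2 * ∑ j ∈ Finset.range k, I (k - j) := by
      rw [Finset.mul_sum]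
      exact Finset.sum_le_sum fun j hj =>
        (abs_le.1 (hc1 j k (Finset.mem_range.1 hj).le)).2
    have a3 : - (4 * ∑ j ∈ Finset.range k, I (k - j)) ≤
        ∑ j ∈ Finset.range k, ∫ ω, (rioM X (j + 1) ω - rioM X j ω) * X k ω ∂P := by
      rw [Finset.mul_sum, ← Finset.sum_neg_distrib]
      exact Finset.sum_le_sum fun j hj => (abs_le.1 (hc2 j k (Finset.mem_range.1 hj))).1
    have a4 := rio_sumI I hI n k hk
    have a5 := hI 0
    linarith
  have hintg : Integrable (fun ω => ∑ k ∈ Finset.range n, (4 * (X k ω * X k ω +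
      2 * ∑ j ∈ Finset.range k, X j ω * X k ω) -
      4 * ∑ j ∈ Finset.range k, (rioM X (j + 1) ω - rioM X j ω) * X k ω)) P :=
    integrable_finsetSum _ fun k _ => (s1 k).sub (s2 k)
  refine (lintegral_mono fun ω => ENNReal.ofReal_le_ofReal (rio_pointwise X n ω)).trans ?_
  rw [← ofReal_integral_eq_lintegral_ofReal hintg
    (Eventually.of_forall fun ω => (sq_nonneg _).trans (rio_pointwise X n ω))]
  refine ENNReal.ofReal_le_ofReal ?_
  rw [integral_finsetSum]
  swap
  · exact fun k _ => (s1 k).sub (s2 k)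
  refine (Finset.sum_le_sum fun k hk => hle k (Finset.mem_range.1 hk)).trans ?_
  simp only [Finset.sum_const, Finset.card_range, nsmul_eq_mul]
  linarith

lemma rio_quarter {Ω : Type*} [MeasurableSpace Ω] (P : Measure Ω) [IsProbabilityMeasure P]
    (A B : Set Ω) (hB : MeasurableSet B) :
    |(P (A ∩ B)).toReal - (P A).toReal * (P B).toReal| ≤ 1 / 4 := by
  have h1 : P.real (A ∩ B) ≤ P.real A := measureReal_mono Set.inter_subset_left
  have h2 : P.real (A ∩ B) ≤ P.real B := measureReal_mono Set.inter_subset_right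
  have h3 : P.real A ≤ 1 := measureReal_le_one
  have h4 : P.real B ≤ 1 := measureReal_le_one
  have h5 : 0 ≤ P.real (A ∩ B) := measureReal_nonneg
  have h6 : P.real (A ∪ B) + P.real (A ∩ B) = P.real A + P.real B :=
    measureReal_union_add_inter hB
  have h7 : P.real (A ∪ B) ≤ 1 := measureReal_le_one
  change |P.real (A ∩ B) - P.real A * P.real B| ≤ 1 / 4
  have h8 : 0 ≤ P.real A := measureReal_nonneg
  have h9 : 0 ≤ P.real B := measureReal_nonneg
  generalize P.real (A ∩ B) = r at *
  generalize P.real A = p at *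
  generalize P.real B = q at *
  rw [abs_le]
  constructor
  · rcases le_total (p + q) 1 with h | h
    · nlinarith [sq_nonneg (p - q)]
    · nlinarith [sq_nonneg (p - q)]
  · rcases le_total p q with h | h
    · nlinarith [sq_nonneg (p - 1 / 2)]
    · nlinarith [sq_nonneg (q - 1 / 2)]

lemma rio_mix {Ω : Type*} [MeasurableSpace Ω] (P : Measure Ω) [IsProbabilityMeasure P]
    (ξ : ℕ → Ω → ℝ) (hmeas : ∀ i, Measurable (ξ i))
    (α : ℕ → ℝ) (hα0 : α 0 = 1 / 4) (hα : ∀ n : ℕ, 1 ≤ n → α n = mixingCoef P ξ n)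
    (j k : ℕ) (hjk : j ≤ k) (A B : Set Ω)
    (hA : MeasurableSet[⨆ i ∈ Set.Iic j, MeasurableSpace.comap (ξ i) inferInstance] A)
    (hB : MeasurableSet[MeasurableSpace.comap (ξ k) inferInstance] B) :
    |P.real (A ∩ B) - P.real A * P.real B| ≤ α (k - j) := by
  have hK : ∀ s : Set ℕ, (⨆ i ∈ s, MeasurableSpace.comap (ξ i) inferInstance) ≤
      (inferInstance : MeasurableSpace Ω) := fun s => iSup₂_le fun i _ => (hmeas i).comap_le
  rcases hjk.eq_or_lt with rfl | hlt
  · rw [Nat.sub_self, hα0]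
    exact rio_quarter P A B ((hmeas j).comap_le _ hB)
  · rw [hα _ (by omega)]
    refine le_csSup ⟨1 / 4, ?_⟩ ⟨j, A, B, hA, ?_, rfl⟩
    · rintro r ⟨k', A', B', _, hB', rfl⟩
      exact rio_quarter P A' B' (hK _ _ hB')
    · have hle : MeasurableSpace.comap (ξ k) inferInstance ≤
          ⨆ i ∈ Set.Ici (j + (k - j)), MeasurableSpace.comap (ξ i) inferInstance :=
        le_iSup₂_of_le (f := fun i (_ : i ∈ Set.Ici (j + (k - j))) =>
          MeasurableSpace.comap (ξ i) (inferInstance : MeasurableSpace ℝ)) k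
          (by simp; omega) le_rfl
      exact hle _ hB

lemma rio_enorm_le {z c I : ℝ} (hc : 0 ≤ c) (hI : 0 ≤ I)
    (h : ‖z‖ₑ ≤ ENNReal.ofReal c * ENNReal.ofReal I) : |z| ≤ c * I := by
  rw [Real.enorm_eq_ofReal_abs, ← ENNReal.ofReal_mul hc] at h
  exact (ENNReal.ofReal_le_ofReal_iff (mul_nonneg hc hI)).1 h

/-- **Rio's maximal inequality** (Theorem A.1): for identically distributed, square-integrable
random variables `ξ₁, ξ₂, …` with strong mixing coefficients `α(n)` (convention `α(0) = 1/4`),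
distribution function `G` of `|ξ₁|` and rightcontinuous inverse `Ḡ^→` of `Ḡ = 1 − G`, one has
for all `x > 0` and `n ∈ ℕ`:
`P[max_{k≤n} |∑_{i=1}^k (ξᵢ − E ξ₁)| ≥ 2x] ≤ (16/x²) n ∑_{j<n} ∫₀^{2α(j)} (Ḡ^→(t))² dt`. -/
theorem rio_maximal_inequality
    {Ω : Type*} [MeasurableSpace Ω] (P : Measure Ω) [IsProbabilityMeasure P]
    (ξ : ℕ → Ω → ℝ) (hmeas : ∀ i, Measurable (ξ i))
    (hident : ∀ i, P.map (ξ i) = P.map (ξ 0))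
    (hsq : Integrable (fun ω => (ξ 0 ω) ^ 2) P)
    -- mixing coefficients with the convention α(0) = 1/4
    (α : ℕ → ℝ) (hα0 : α 0 = 1 / 4) (hα : ∀ n : ℕ, 1 ≤ n → α n = mixingCoef P ξ n)
    -- G, Ḡ and the rightcontinuous inverse Ḡ^→(t) = sup {y ≥ 0 : Ḡ(y) > t}
    (G : ℝ → ℝ) (hG : ∀ y : ℝ, G y = ((P.map fun ω => |ξ 0 ω|) (Set.Iic y)).toReal)
    (Ginv : ℝ → ℝ) (hGinv : ∀ t : ℝ, Ginv t = sSup {y : ℝ | 0 ≤ y ∧ t < 1 - G y})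
    (x : ℝ) (hx : 0 < x) (n : ℕ) :
    P {ω : Ω | ∃ k ∈ Finset.Icc 1 n,
        2 * x ≤ |∑ i ∈ Finset.range k, (ξ i ω - ∫ ω', ξ 0 ω' ∂P)|} ≤
      ENNReal.ofReal (16 / x ^ 2 * n *
        ∑ j ∈ Finset.range n, ∫ t in Set.Ioc (0 : ℝ) (2 * α j), (Ginv t) ^ 2) := by
  set m := ∫ ω', ξ 0 ω' ∂P with hm
  set I : ℕ → ℝ := fun d => ∫ t in Set.Ioc (0 : ℝ) (2 * α d), (Ginv t) ^ 2 with hIdef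
  have hI : ∀ d, 0 ≤ I d := fun d => integral_nonneg fun t => sq_nonneg _
  have hidd : ∀ i, ProbabilityTheory.IdentDistrib (ξ 0) (ξ i) P P := fun i =>
    ⟨(hmeas 0).aemeasurable, (hmeas i).aemeasurable, (hident i).symm⟩
  have hξ0 : MemLp (ξ 0) 2 P := (memLp_two_iff_integrable_sq (hmeas 0).aestronglyMeasurable).2 hsq
  have hξ2 : ∀ i, MemLp (ξ i) 2 P := fun i => (hidd i).memLp_snd hξ0
  have hmean : ∀ i, ∫ ω, ξ i ω ∂P = m := fun i => ((hidd i).integral_eq).symm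
  have hid : ∀ i u, P {ω | u < |ξ i ω|} = P {ω | u < |ξ 0 ω|} := by
    intro i u
    have hs : MeasurableSet {y : ℝ | u < |y|} := measurableSet_lt measurable_const measurable_id.abs
    have := congrArg (fun μ => μ {y : ℝ | u < |y|}) (hident i)
    change (P.map (ξ i)) _ = (P.map (ξ 0)) _ at this
    rwa [Measure.map_apply (hmeas i) hs, Measure.map_apply (hmeas 0) hs] at this
  have hGbar : ∀ y, 1 - G y = P.real {ω | y < |ξ 0 ω|} := by
    intro y
    rw [hG, Measure.map_apply (hmeas 0).abs measurableSet_Iic]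
    have hs : MeasurableSet ((fun ω => |ξ 0 ω|) ⁻¹' Set.Iic y) := (hmeas 0).abs measurableSet_Iic
    have h := probReal_compl_eq_one_sub (μ := P) hs
    have e : ((fun ω => |ξ 0 ω|) ⁻¹' Set.Iic y)ᶜ = {ω | y < |ξ 0 ω|} := by ext ω; simp
    rw [e] at h
    exact h.symm
  have hJ : ∀ d, ∫⁻ u in Set.Ioi (0:ℝ), ∫⁻ v in Set.Ioi (0:ℝ),
        min (ENNReal.ofReal (2 * α d)) (min (P {ω | u < |ξ 0 ω|}) (P {ω | v < |ξ 0 ω|})) =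
      ENNReal.ofReal (I d) := fun d =>
    rio_J P (ξ 0) (hmeas 0) hξ0 Ginv (fun t => by rw [hGinv]; simp only [hGbar]) _
  have hFle : ∀ j, (⨆ i ∈ Set.Iic j, MeasurableSpace.comap (ξ i) inferInstance) ≤
      (inferInstance : MeasurableSpace Ω) := fun j => iSup₂_le fun i _ => (hmeas i).comap_le
  have hFm : ∀ j l, l ≤ j →
      Measurable[⨆ i ∈ Set.Iic j, MeasurableSpace.comap (ξ i) inferInstance] (ξ l) := by
    intro j l hl
    have : MeasurableSpace.comap (ξ l) inferInstance ≤
        ⨆ i ∈ Set.Iic j, MeasurableSpace.comap (ξ i) inferInstance :=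
      le_iSup₂_of_le (f := fun i (_ : i ∈ Set.Iic j) =>
          MeasurableSpace.comap (ξ i) (inferInstance : MeasurableSpace ℝ)) l
          (by simpa using hl) le_rfl
    exact (comap_measurable (ξ l)).mono this le_rfl
  -- mixing for functions
  have hmixf : ∀ j k, j ≤ k → ∀ Y : Ω → ℝ,
      Measurable[⨆ i ∈ Set.Iic j, MeasurableSpace.comap (ξ i) inferInstance] Y →
      ∀ S T : Set ℝ, MeasurableSet S → MeasurableSet T →
      |P.real (Y ⁻¹' S ∩ ξ k ⁻¹' T) - P.real (Y ⁻¹' S) * P.real (ξ k ⁻¹' T)|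
        ≤ 2 * α (k - j) / 2 := by
    intro j k hjk Y hY S T hS hT
    rw [mul_div_cancel_left₀ _ (by norm_num : (2:ℝ) ≠ 0)]
    exact rio_mix P ξ hmeas α hα0 hα j k hjk _ _ (hY hS) ⟨T, hT, rfl⟩
  have hcov1 : ∀ j k, j ≤ k → |∫ ω, (ξ j ω - m) * (ξ k ω - m) ∂P| ≤ 2 * I (k - j) := by
    intro j k hjk
    have h := rio_cov P (2 * α (k - j)) (ξ j) (ξ k) (hmeas j) (hmeas k) (hξ2 j) (hξ2 k)
      (hmixf j k hjk _ (hFm j j le_rfl))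
    simp only [hid, hJ, hmean] at h
    have hXk : MemLp (fun ω => ξ k ω - m) 2 P := (hξ2 k).sub (memLp_const m)
    have e : ∫ ω, (ξ j ω - m) * (ξ k ω - m) ∂P = ∫ ω, ξ j ω * (ξ k ω - m) ∂P := by
      simp only [sub_mul (ξ j _)]
      have i1 : Integrable (fun ω => ξ j ω * (ξ k ω - m)) P := (hξ2 j).integrable_mul hXk
      have i2 : Integrable (fun ω => ξ k ω - m) P := hXk.integrable (by norm_num)
      rw [integral_sub i1 (i2.const_mul m), integral_const_mul,
        integral_sub ((hξ2 k).integrable (by norm_num)) (integrable_const m), hmean]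
      simp
    rw [e]
    exact rio_enorm_le (by norm_num) (hI _) (by simpa using h)
  have hcov2 : ∀ j k, j < k → ∀ Y : Ω → ℝ,
      Measurable[⨆ i ∈ Set.Iic j, MeasurableSpace.comap (ξ i) inferInstance] Y →
      MemLp Y 2 P → (∀ ω, |Y ω| ≤ |ξ j ω - m|) →
      |∫ ω, Y ω * (ξ k ω - m) ∂P| ≤ 4 * I (k - j) := by
    intro j k hjk Y hY hY2 hYb
    have h := rio_cov P (2 * α (k - j)) Y (ξ k) (hY.mono (hFle j) le_rfl) (hmeas k) hY2 (hξ2 k)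
      (hmixf j k hjk.le _ hY)
    simp only [hid, hmean] at h
    have h2 := rio_shift P (ξ 0) (ξ j) Y (hmeas 0) (hid j)
      (fun ω => (hYb ω).trans (abs_sub _ _)) (ENNReal.ofReal (2 * α (k - j)))
    rw [hJ] at h2
    have h3 := h.trans (mul_le_mul_right h2 2)
    refine rio_enorm_le (by norm_num) (hI _) (h3.trans (le_of_eq ?_))
    rw [← mul_assoc]
    congr 1
    norm_num
  have hside : ∀ s : ℝ, (s = 1 ∨ s = -1) →
      ∫⁻ ω, ENNReal.ofReal (rioM (fun i ω => s * (ξ i ω - m)) n ω ^ 2) ∂P ≤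
      ENNReal.ofReal (32 * n * ∑ d ∈ Finset.range n, I d) := by
    intro s hs
    have habs : |s| = 1 := by rcases hs with rfl | rfl <;> simp
    have hss : s * s = 1 := by rcases hs with rfl | rfl <;> norm_num
    have hX : ∀ i, Measurable ((fun i ω => s * (ξ i ω - m)) i : Ω → ℝ) := fun i =>
      ((hmeas i).sub_const m).const_mul s
    have hX2 : ∀ i, MemLp ((fun i ω => s * (ξ i ω - m)) i : Ω → ℝ) 2 P := fun i =>
      ((hξ2 i).sub (memLp_const m)).const_mul s
    refine rio_one_sided P _ hX hX2 I hI ?_ ?_ n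
    · intro j k hjk
      have : ∀ ω, s * (ξ j ω - m) * (s * (ξ k ω - m)) = (ξ j ω - m) * (ξ k ω - m) := fun ω => by
        linear_combination (ξ j ω - m) * (ξ k ω - m) * hss
      simp only [this]
      exact hcov1 j k hjk
    · intro j k hjk
      have hYm : Measurable[⨆ i ∈ Set.Iic j, MeasurableSpace.comap (ξ i) inferInstance]
          (fun ω => rioM (fun i ω => s * (ξ i ω - m)) (j + 1) ω -
            rioM (fun i ω => s * (ξ i ω - m)) j ω) := by
        refine Measurable.sub ?_ ?_
        · exact @rioM_measurable Ω (_) _ (j + 1) fun l hl =>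
            ((hFm j l (by omega)).sub_const m).const_mul s
        · exact @rioM_measurable Ω (_) _ j fun l hl =>
            ((hFm j l (by omega)).sub_const m).const_mul s
      have h := hcov2 j k hjk _ hYm (rioM_memLp P _ hX hX2 j) (fun ω => by
        have := rioM_incr (fun i ω => s * (ξ i ω - m)) j ω
        simpa [abs_mul, habs] using this)
      have e : ∀ ω, (rioM (fun i ω => s * (ξ i ω - m)) (j + 1) ω -
            rioM (fun i ω => s * (ξ i ω - m)) j ω) * (s * (ξ k ω - m)) =
          s * ((rioM (fun i ω => s * (ξ i ω - m)) (j + 1) ω -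
            rioM (fun i ω => s * (ξ i ω - m)) j ω) * (ξ k ω - m)) := fun ω => by ring
      simp only [e]
      rw [integral_const_mul, abs_mul, habs, one_mul]
      exact h
  have hp := hside 1 (Or.inl rfl)
  have hn := hside (-1) (Or.inr rfl)
  set M1 : Ω → ℝ := rioM (fun i ω => 1 * (ξ i ω - m)) n with hM1
  set M2 : Ω → ℝ := rioM (fun i ω => -1 * (ξ i ω - m)) n with hM2
  have mM1 : Measurable M1 := rioM_measurable _ _ fun l _ => ((hmeas l).sub_const m).const_mul 1
  have mM2 : Measurable M2 := rioM_measurable _ _ fun l _ => ((hmeas l).sub_const m).const_mul (-1)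
  have hsub : {ω : Ω | ∃ k ∈ Finset.Icc 1 n, 2 * x ≤ |∑ i ∈ Finset.range k, (ξ i ω - m)|} ⊆
      {ω | ENNReal.ofReal (4 * x ^ 2) ≤
        ENNReal.ofReal (M1 ω ^ 2) + ENNReal.ofReal (M2 ω ^ 2)} := by
    rintro ω ⟨k, hk, hkx⟩
    have hkn := (Finset.mem_Icc.1 hk).2
    show ENNReal.ofReal (4 * x ^ 2) ≤ _
    rcases le_abs.1 hkx with h | h
    · refine le_trans (ENNReal.ofReal_le_ofReal ?_) le_self_add
      have h1 := rioM_ge (fun i ω => 1 * (ξ i ω - m)) k ω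
      have h2 : rioM (fun i ω => 1 * (ξ i ω - m)) k ω ≤ M1 ω := rioM_mono _ ω hkn
      simp only [one_mul] at h1 h2
      have h3 : 2 * x ≤ M1 ω := by linarith
      nlinarith
    · refine le_trans (ENNReal.ofReal_le_ofReal ?_) le_add_self
      have h1 := rioM_ge (fun i ω => -1 * (ξ i ω - m)) k ω
      have h2 : rioM (fun i ω => -1 * (ξ i ω - m)) k ω ≤ M2 ω := rioM_mono _ ω hkn
      rw [← Finset.mul_sum] at h1
      have h3 : 2 * x ≤ M2 ω := by linarith
      nlinarith
  refine (measure_mono hsub).trans ?_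
  have hmk := mul_meas_ge_le_lintegral₀ (μ := P)
    (f := fun ω => ENNReal.ofReal (M1 ω ^ 2) + ENNReal.ofReal (M2 ω ^ 2))
    (((mM1.pow_const 2).ennreal_ofReal.add (mM2.pow_const 2).ennreal_ofReal).aemeasurable)
    (ENNReal.ofReal (4 * x ^ 2))
  rw [lintegral_add_left (mM1.pow_const 2).ennreal_ofReal] at hmk
  have hsum0 : 0 ≤ ∑ d ∈ Finset.range n, I d := Finset.sum_nonneg fun d _ => hI d
  have h64 := hmk.trans (add_le_add hp hn)
  rw [← ENNReal.ofReal_add (by positivity) (by positivity)] at h64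
  have hx4 : 0 < 4 * x ^ 2 := by positivity
  have hfin : ENNReal.ofReal (16 / x ^ 2 * n * ∑ j ∈ Finset.range n, I j) =
      ENNReal.ofReal (32 * n * ∑ d ∈ Finset.range n, I d + 32 * n * ∑ d ∈ Finset.range n, I d) /
        ENNReal.ofReal (4 * x ^ 2) := by
    rw [← ENNReal.ofReal_div_of_pos hx4]
    congr 1
    field_simp
    ring
  rw [hfin, ENNReal.le_div_iff_mul_le (Or.inl (ENNReal.ofReal_pos.2 hx4).ne') (Or.inl ENNReal.ofReal_ne_top),
    mul_comm]
  exact h64
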